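/- If σ₁ ≠ σ₂ or σ₃ ≠ σ₄, then an element (u,v) of Cay(K,c,σ₁,σ₂,σ₃,σ₄) commutes with every element of the algebra if and only if v = 0 and σ₃(u) = σ₄(u); that is, the commutator of the algebra equals {(u,0) : u ∈ K, σ₃(u) = σ₄(u)}. -/

import Mathlib

/-!
Testing `(u, v)` against `(x, 0)` and `(0, y)` separates the variables in the commutation
identity. Cancelling `v` in the condition on `x` gives `σ₃ = σ₄` unless `v = 0`. In the condition
on `y`, the choice `y = 1` gives `σ₁ v = σ₂ v`, and cancelling this element gives `σ₁ = σ₂`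
unless `v = 0`.
-/

/-- The multiplication of the nonassociative Cayley–Dickson-type algebra
`Cay(R, c, σ₁, σ₂, σ₃, σ₄)` on `R × R`. The twists are plain functions, so that bundled
homomorphisms of any kind can be supplied through their coercions. -/
def cayMul {R : Type*} [Mul R] [Add R] (c : R) (σ₁ σ₂ σ₃ σ₄ : R → R) (z w : R × R) : R × R :=
  (z.1 * w.1 + c * σ₁ z.2 * σ₂ w.2, σ₃ z.1 * w.2 + z.2 * σ₄ w.1)

theorem forall_mul_map_eq_mul_map_iff {α M G : Type*} [MulZeroClass M] [IsLeftCancelMulZero M]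
    [FunLike G α M] {a : M} {σ τ : G} :
    (∀ x, a * σ x = a * τ x) ↔ a = 0 ∨ σ = τ := by
  simp only [mul_eq_mul_left_iff, DFunLike.ext_iff, forall_or_left, or_comm]

theorem forall_map_mul_map_eq_map_mul_map_iff {M N G : Type*} [MulZeroOneClass M]
    [CommMonoidWithZero N] [IsCancelMulZero N] [FunLike G M N] [MonoidWithZeroHomClass G M N]
    {σ τ : G} (hτ : Function.Injective τ) {v : M} :
    (∀ y, σ v * τ y = σ y * τ v) ↔ v = 0 ∨ σ = τ := by
  constructor
  · intro hcomm
    have hστ : σ v = τ v := by simpa using hcomm 1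
    have hcancel : ∀ y, τ v * σ y = τ v * τ y := fun y ↦ by
      rw [mul_comm, ← hcomm y, hστ]
    exact (forall_mul_map_eq_mul_map_iff.mp hcancel).imp_left (map_eq_zero_iff τ hτ).mp
  · rintro (rfl | rfl) y
    · simp
    · exact mul_comm _ _

section Commutator

variable {R G : Type*} [CommSemiring R] [FunLike G R R] [MonoidWithZeroHomClass G R R]
  {c : R} (σ₁ σ₂ σ₃ σ₄ : G)

theorem forall_cayMul_comm_iff (u v : R) :
    (∀ w, cayMul c σ₁ σ₂ σ₃ σ₄ (u, v) w = cayMul c σ₁ σ₂ σ₃ σ₄ w (u, v)) ↔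
      (∀ y, c * (σ₁ v * σ₂ y) = c * (σ₁ y * σ₂ v)) ∧ (∀ x, v * σ₃ x = v * σ₄ x) ∧
        σ₃ u = σ₄ u := by
  constructor
  · intro hcomm
    refine ⟨fun y ↦ ?_, fun x ↦ ?_, ?_⟩
    · simpa [cayMul, mul_assoc] using congrArg Prod.fst (hcomm (0, y))
    · simpa [cayMul, mul_comm] using (congrArg Prod.snd (hcomm (x, 0))).symm
    · simpa [cayMul] using congrArg Prod.snd (hcomm (0, 1))
  · rintro ⟨hfst, hsnd, hu⟩ ⟨x, y⟩
    ext
    · simp only [cayMul, mul_assoc, hfst, mul_comm u]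
    · simp only [cayMul, hu, ← hsnd, mul_comm, add_comm]

theorem cay_field_commutator_general [IsCancelMulZero R] (hc : c ≠ 0)
    (hσ₂ : Function.Injective σ₂) (u v : R) :
    (∀ w, cayMul c σ₁ σ₂ σ₃ σ₄ (u, v) w = cayMul c σ₁ σ₂ σ₃ σ₄ w (u, v)) ↔
      (v = 0 ∨ σ₁ = σ₂ ∧ σ₃ = σ₄) ∧ σ₃ u = σ₄ u := by
  simp only [forall_cayMul_comm_iff, mul_right_inj' hc,
    forall_map_mul_map_eq_map_mul_map_iff hσ₂, forall_mul_map_eq_mul_map_iff, or_and_left,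
    and_assoc]

end Commutator

/-- If `σ₁ ≠ σ₂` or `σ₃ ≠ σ₄`, then an element `(u,v)` of
`Cay(K,c,σ₁,σ₂,σ₃,σ₄)` commutes with every element iff `v = 0` and `σ₃(u) = σ₄(u)`;
i.e. the commutator is `{(u,0) : σ₃(u) = σ₄(u)}`. -/
theorem cay_field_commutator
    {F K : Type*} [Field F] [Field K] [Algebra F K] [FiniteDimensional F K]
    (σ₁ σ₂ σ₃ σ₄ : K ≃ₐ[F] K) (c : K) (hc : c ≠ 0)
    (h : σ₁ ≠ σ₂ ∨ σ₃ ≠ σ₄) (u v : K) :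
    (∀ x y : K,
        (u * x + c * σ₁ v * σ₂ y, σ₃ u * y + v * σ₄ x)
          = (x * u + c * σ₁ y * σ₂ v, σ₃ x * v + y * σ₄ u)) ↔
      (v = 0 ∧ σ₃ u = σ₄ u) := by
  have hne : ¬(σ₁ = σ₂ ∧ σ₃ = σ₄) := not_and_or.mpr h
  simpa only [Prod.forall, cayMul, hne, or_false] using
    cay_field_commutator_general σ₁ σ₂ σ₃ σ₄ hc σ₂.injective u v
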